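/- Let h: (0,∞) → ℂ be smooth with compact support contained in (0,∞), let w ∈ ℂ, and for v > 0 define ħ^ℜ_w(v) = ∫₀^∞ h(√u)·(2πu)^{−1/2}·u^{w/2}·cos(uv) du, with Mellin transform ℏ̃^ℜ_w(s) = ∫₀^∞ ħ^ℜ_w(v)·v^{s−1} dv. Then for every s with 0 < Re(s) < 1 one has the explicit evaluation ℏ̃^ℜ_w(s) = Γ(s)·cos(πs/2)·∫₀^∞ h(√u)·(2πu)^{−1/2}·u^{w/2−s} du. -/

import Mathlib

open MeasureTheory

/-- `ħ^ℜ_w(v) = ∫₀^∞ h(√u) (2πu)^{−1/2} u^{w/2} cos(uv) du`. -/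
noncomputable def hbarRe (h : ℝ → ℂ) (w : ℂ) (v : ℝ) : ℂ :=
  ∫ u in Set.Ioi (0 : ℝ),
    h (Real.sqrt u) * ((1 / Real.sqrt (2 * Real.pi * u) : ℝ) : ℂ) *
      (u : ℂ) ^ (w / 2) * ((Real.cos (u * v) : ℝ) : ℂ)

/-!
The evaluation would be Fubini's theorem followed by
`∫₀^∞ cos(uv) v^{s−1} dv = Γ(s) cos(πs/2) u^{−s}`, except that the latter integral is only
conditionally convergent. With a damping factor `e^{−εv}` everything converges absolutely, and the
inner integral becomes the average of the two values `(ε ± iu)^{−s} Γ(s)`, obtained from the Gamma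
integral by analytic continuation in the Laplace variable. These are bounded by a multiple of
`u^{−Re s}` uniformly in `ε`, so one may let `ε → 0⁺` by dominated convergence on both sides; on the
left this uses that `ħ^ℜ_w(v) = O(1/v)` as `v → ∞`, by one integration by parts.
-/

open Filter Set Topology

section LaplaceMellin

variable {r s : ℂ}

lemma norm_cexp_neg_mul_ofReal (r : ℂ) (t : ℝ) :
    ‖Complex.exp (-(r * t))‖ = Real.exp (-r.re * t) := by
  simp [Complex.norm_exp]

lemma mellinConvergent_cexp_neg_mul (hr : 0 < r.re) (hs : 0 < s.re) :
    MellinConvergent (fun t : ℝ ↦ Complex.exp (-(r * t))) s := by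
  have hcont : Continuous fun t : ℝ ↦ Complex.exp (-(r * t)) := by fun_prop
  refine mellinConvergent_of_isBigO_rpow_exp (b := 0) hr
    (hcont.locallyIntegrable.locallyIntegrableOn _) ?_ ?_ hs
  · exact .of_bound' <| .of_forall fun t ↦ by
      rw [norm_cexp_neg_mul_ofReal, Real.norm_of_nonneg (Real.exp_nonneg _)]
  · simpa using (hcont.tendsto 0).mono_left nhdsWithin_le_nhds |>.isBigO_one ℝ

lemma differentiableAt_mellin_cexp_neg_mul (hr : 0 < r.re) (hs : 0 < s.re) :
    DifferentiableAt ℂ (fun z : ℂ ↦ mellin (fun t : ℝ ↦ Complex.exp (-(z * t))) s) r := by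
  have hnhds : {z : ℂ | r.re / 2 < z.re} ∈ 𝓝 r :=
    (isOpen_lt continuous_const Complex.continuous_re).mem_nhds (half_lt_self hr)
  have hmeas (z : ℂ) : AEStronglyMeasurable
      (fun t : ℝ ↦ (t : ℂ) ^ (s - 1) • Complex.exp (-(z * t))) (volume.restrict (Ioi 0)) :=
    Measurable.aestronglyMeasurable (by fun_prop)
  have hbound : IntegrableOn (fun t : ℝ ↦ t ^ s.re * Real.exp (-(r.re / 2) * t)) (Ioi 0) := by
    simpa using integrableOn_rpow_mul_exp_neg_mul_rpow (p := 1) (by linarith) one_pos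
      (half_pos hr)
  refine (hasDerivAt_integral_of_dominated_loc_of_deriv_le
    (F' := fun z t ↦ (t : ℂ) ^ (s - 1) • (Complex.exp (-(z * t)) * -t)) hnhds
    (.of_forall hmeas) (mellinConvergent_cexp_neg_mul hr hs)
    (Measurable.aestronglyMeasurable (by fun_prop)) ?_ hbound ?_).2.differentiableAt
  · filter_upwards [ae_restrict_mem measurableSet_Ioi] with t (ht : 0 < t) z (hz : r.re / 2 < z.re)
    calc ‖(t : ℂ) ^ (s - 1) • (Complex.exp (-(z * t)) * -t)‖
        = t ^ (s.re - 1) * t * Real.exp (-z.re * t) := by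
          rw [norm_smul, norm_mul, norm_cexp_neg_mul_ofReal, norm_neg, Complex.norm_real,
            Real.norm_of_nonneg ht.le, Complex.norm_cpow_eq_rpow_re_of_pos ht, Complex.sub_re,
            Complex.one_re]
          ring
      _ = t ^ s.re * Real.exp (-z.re * t) := by
          rw [Real.rpow_sub_one ht.ne', div_mul_cancel₀ _ ht.ne']
      _ ≤ t ^ s.re * Real.exp (-(r.re / 2) * t) := by gcongr
  · refine .of_forall fun t z _ ↦ (HasDerivAt.cexp ?_).const_mul _
    simpa using ((hasDerivAt_id' z).mul_const (t : ℂ)).fun_neg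

lemma mellin_cexp_neg_ofReal_mul {x : ℝ} (hx : 0 < x) (hs : 0 < s.re) :
    mellin (fun t : ℝ ↦ Complex.exp (-(x * t))) s = (x : ℂ) ^ (-s) * Complex.Gamma s := by
  have harg : (x : ℂ).arg ≠ Real.pi := by
    rw [Complex.arg_ofReal_of_nonneg hx.le]
    exact Real.pi_pos.ne
  simp only [mellin, smul_eq_mul]
  rw [Complex.integral_cpow_mul_exp_neg_mul_Ioi hs hx, one_div, Complex.inv_cpow _ _ harg,
    Complex.cpow_neg]

lemma tendsto_ofReal_nhdsGT_nhdsNE (x : ℝ) :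
    Tendsto (fun y : ℝ ↦ (y : ℂ)) (𝓝[>] x) (𝓝[≠] (x : ℂ)) :=
  Complex.continuous_ofReal.continuousWithinAt.tendsto_nhdsWithin fun _ hy ↦
    Complex.ofReal_injective.ne (ne_of_gt hy)

theorem mellin_cexp_neg_mul (hr : 0 < r.re) (hs : 0 < s.re) :
    mellin (fun t : ℝ ↦ Complex.exp (-(r * t))) s = r ^ (-s) * Complex.Gamma s := by
  have hopen : IsOpen {z : ℂ | 0 < z.re} := isOpen_lt continuous_const Complex.continuous_re
  have hleft : AnalyticOnNhd ℂ
      (fun z : ℂ ↦ mellin (fun t : ℝ ↦ Complex.exp (-(z * t))) s) {z | 0 < z.re} :=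
    DifferentiableOn.analyticOnNhd (fun z hz ↦
      (differentiableAt_mellin_cexp_neg_mul hz hs).differentiableWithinAt) hopen
  have hright : AnalyticOnNhd ℂ (fun z : ℂ ↦ z ^ (-s) * Complex.Gamma s) {z | 0 < z.re} :=
    fun z hz ↦ (analyticAt_id.cpow analyticAt_const (.inl hz)).mul analyticAt_const
  have heq : ∀ᶠ x : ℝ in 𝓝[>] 1, mellin (fun t : ℝ ↦ Complex.exp (-((x : ℂ) * t))) s =
      (x : ℂ) ^ (-s) * Complex.Gamma s := by
    filter_upwards [self_mem_nhdsWithin] with x (hx : 1 < x)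
    exact mellin_cexp_neg_ofReal_mul (one_pos.trans hx) hs
  exact hleft.eqOn_of_preconnected_of_frequently_eq hright
    (convex_halfSpace_re_gt 0).isPreconnected (z₀ := ((1 : ℝ) : ℂ)) (by simp)
    ((tendsto_ofReal_nhdsGT_nhdsNE 1).frequently heq.frequently) hr

end LaplaceMellin

section DampedCosine

variable {s : ℂ}

/-- The Mellin transform at `s` of the damped cosine `v ↦ e^{−εv} cos(uv)`, in closed form. The
integral represents it for `ε > 0`, while the closed form still makes sense at `ε = 0`. -/
noncomputable def dampedCosMellin (s : ℂ) (ε u : ℝ) : ℂ :=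
  Complex.Gamma s / 2 * ((ε + u * Complex.I) ^ (-s) + (ε - u * Complex.I) ^ (-s))

lemma hasMellin_cexp_neg_mul_cos {ε : ℝ} (hε : 0 < ε) (hs : 0 < s.re) (u : ℝ) :
    HasMellin (fun v : ℝ ↦ Complex.exp (-(ε * v)) * (Real.cos (u * v) : ℂ)) s
      (dampedCosMellin s ε u) := by
  have hcos (v : ℝ) : Complex.exp (-(ε * v)) * (Real.cos (u * v) : ℂ) =
      (Complex.exp (-((ε + u * Complex.I) * v)) +
        Complex.exp (-((ε - u * Complex.I) * v))) / 2 := by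
    rw [Complex.ofReal_cos, Complex.cos, mul_div_assoc', mul_add, ← Complex.exp_add,
      ← Complex.exp_add, add_comm]
    congr! 3 <;> push_cast <;> ring_nf
  have hplus : 0 < ((ε : ℂ) + u * Complex.I).re := by simpa
  have hminus : 0 < ((ε : ℂ) - u * Complex.I).re := by simpa
  have hsum := hasMellin_add (mellinConvergent_cexp_neg_mul hplus hs)
    (mellinConvergent_cexp_neg_mul hminus hs)
  simp_rw [hcos]
  refine ⟨hsum.1.div_const 2, ?_⟩
  rw [mellin_div_const, hsum.2, mellin_cexp_neg_mul hplus hs, mellin_cexp_neg_mul hminus hs,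
    dampedCosMellin]
  ring

lemma ofReal_mul_cpow {x : ℝ} (hx : 0 < x) {z : ℂ} (hz : z ≠ 0) (a : ℂ) :
    (x * z) ^ a = (x : ℂ) ^ a * z ^ a := by
  have hx' : (x : ℂ) ≠ 0 := Complex.ofReal_ne_zero.2 hx.ne'
  rw [Complex.cpow_def_of_ne_zero (mul_ne_zero hx' hz), Complex.cpow_def_of_ne_zero hx',
    Complex.cpow_def_of_ne_zero hz, Complex.log_ofReal_mul hx hz, Complex.ofReal_log hx.le,
    add_mul, Complex.exp_add]

lemma dampedCosMellin_zero (s : ℂ) {u : ℝ} (hu : 0 < u) :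
    dampedCosMellin s 0 u =
      Complex.Gamma s * Complex.cos (Real.pi * s / 2) * (u : ℂ) ^ (-s) := by
  have hI : Complex.I ^ (-s) = Complex.exp (-(Real.pi * s / 2) * Complex.I) := by
    rw [Complex.cpow_def_of_ne_zero Complex.I_ne_zero, Complex.log_I]
    ring_nf
  have hnegI : (-Complex.I) ^ (-s) = Complex.exp (Real.pi * s / 2 * Complex.I) := by
    rw [Complex.cpow_def_of_ne_zero (neg_ne_zero.2 Complex.I_ne_zero), Complex.log_neg_I]
    ring_nf
  rw [dampedCosMellin, Complex.ofReal_zero, zero_add, zero_sub, ← mul_neg,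
    ofReal_mul_cpow hu Complex.I_ne_zero, ofReal_mul_cpow hu (neg_ne_zero.2 Complex.I_ne_zero),
    hI, hnegI, Complex.cos]
  ring

lemma tendsto_dampedCosMellin (s : ℂ) {u : ℝ} (hu : 0 < u) :
    Tendsto (fun ε ↦ dampedCosMellin s ε u) (𝓝 0)
      (𝓝 (Complex.Gamma s * Complex.cos (Real.pi * s / 2) * (u : ℂ) ^ (-s))) := by
  rw [← dampedCosMellin_zero s hu]
  have hplus : ContinuousAt (fun ε : ℝ ↦ ((ε : ℂ) + u * Complex.I) ^ (-s)) 0 :=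
    ContinuousAt.cpow (by fun_prop) continuousAt_const (.inr (by simpa using hu.ne'))
  have hminus : ContinuousAt (fun ε : ℝ ↦ ((ε : ℂ) - u * Complex.I) ^ (-s)) 0 :=
    ContinuousAt.cpow (by fun_prop) continuousAt_const (.inr (by simpa using hu.ne'))
  exact (hplus.add hminus).const_mul _

lemma norm_cpow_neg_le_abs_im_rpow {z : ℂ} (hs : 0 ≤ s.re) (hz : z.im ≠ 0) :
    ‖z ^ (-s)‖ ≤ |z.im| ^ (-s.re) * Real.exp (Real.pi * |s.im|) := by
  have hnorm : ‖z‖ ^ (-s.re) ≤ |z.im| ^ (-s.re) :=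
    Real.rpow_le_rpow_of_nonpos (abs_pos.2 hz) (Complex.abs_im_le_norm z) (neg_nonpos.2 hs)
  have harg : z.arg * s.im ≤ Real.pi * |s.im| :=
    (le_abs_self _).trans <| (abs_mul _ _).trans_le <| by
      gcongr
      exact Complex.abs_arg_le_pi z
  calc ‖z ^ (-s)‖ ≤ ‖z‖ ^ (-s).re / Real.exp (z.arg * (-s).im) := Complex.norm_cpow_le z (-s)
    _ = ‖z‖ ^ (-s.re) * Real.exp (z.arg * s.im) := by
      rw [Complex.neg_re, Complex.neg_im, mul_neg, Real.exp_neg, div_inv_eq_mul]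
    _ ≤ |z.im| ^ (-s.re) * Real.exp (Real.pi * |s.im|) := by gcongr

lemma norm_dampedCosMellin_le (hs : 0 ≤ s.re) (ε : ℝ) {u : ℝ} (hu : u ≠ 0) :
    ‖dampedCosMellin s ε u‖ ≤
      ‖Complex.Gamma s‖ * Real.exp (Real.pi * |s.im|) * |u| ^ (-s.re) := by
  have hplus := norm_cpow_neg_le_abs_im_rpow (z := ε + u * Complex.I) hs (by simpa)
  have hminus := norm_cpow_neg_le_abs_im_rpow (z := ε - u * Complex.I) hs (by simpa)
  simp only [Complex.add_im, Complex.sub_im, Complex.ofReal_im, Complex.im_ofReal_mul,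
    Complex.I_im, mul_one, zero_add, zero_sub, abs_neg] at hplus hminus
  rw [dampedCosMellin, norm_mul, norm_div, RCLike.norm_ofNat]
  calc _ ≤ ‖Complex.Gamma s‖ / 2 * (|u| ^ (-s.re) * Real.exp (Real.pi * |s.im|) +
        |u| ^ (-s.re) * Real.exp (Real.pi * |s.im|)) := by
        gcongr
        exact (norm_add_le _ _).trans (add_le_add hplus hminus)
    _ = _ := by ring

end DampedCosine

section MellinConvergence

variable {E : Type*} [NormedAddCommGroup E] [NormedSpace ℂ E] {f : ℝ → E} {s : ℂ}

lemma tendsto_mellin_cexp_neg_smul (hf : MellinConvergent f s) :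
    Tendsto (fun ε : ℝ ↦ mellin (fun v ↦ Complex.exp (-(ε * v)) • f v) s) (𝓝[>] 0)
      (𝓝 (mellin f s)) := by
  simp_rw [mellin, smul_comm _ (Complex.exp _)]
  refine tendsto_integral_filter_of_dominated_convergence _ ?_ ?_ hf.norm ?_
  · exact .of_forall fun ε ↦
      (Continuous.aestronglyMeasurable (by fun_prop)).smul hf.aestronglyMeasurable
  · filter_upwards [self_mem_nhdsWithin] with ε (hε : 0 < ε)
    filter_upwards [ae_restrict_mem measurableSet_Ioi] with v (hv : 0 < v)
    rw [norm_smul, norm_cexp_neg_mul_ofReal]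
    refine mul_le_of_le_one_left (norm_nonneg _) (Real.exp_le_one_iff.2 ?_)
    simpa using (mul_pos hε hv).le
  · refine .of_forall fun v ↦ Tendsto.mono_left ?_ nhdsWithin_le_nhds
    exact Continuous.tendsto' (by fun_prop) _ _ (by simp)

lemma mellinConvergent_of_hasCompactSupport (hf : Continuous f) (hcs : HasCompactSupport f)
    (hsupp : tsupport f ⊆ Ioi 0) (s : ℂ) : MellinConvergent f s := by
  have hcont : ContinuousOn (fun t : ℝ ↦ (t : ℂ) ^ (s - 1) • f t) (tsupport f) := fun t ht ↦
    ((Complex.continuousAt_ofReal_cpow_const _ _ (.inr (hsupp ht).ne')).smul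
      hf.continuousAt).continuousWithinAt
  have hsub : Function.support (fun t : ℝ ↦ (t : ℂ) ^ (s - 1) • f t) ⊆ tsupport f :=
    (Function.support_smul_subset_right _ _).trans (subset_tsupport f)
  exact ((integrableOn_iff_integrable_of_support_subset hsub).1
    (hcont.integrableOn_compact hcs)).integrableOn

end MellinConvergence

section CosTransform

/-- The Fourier cosine transform `v ↦ ∫₀^∞ g(u) cos(uv) du`, without normalizing constant. -/
noncomputable def cosTransform (g : ℝ → ℂ) (v : ℝ) : ℂ :=
  ∫ u in Ioi (0 : ℝ), g u * (Real.cos (u * v) : ℂ)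

variable {g g' : ℝ → ℂ} {s : ℂ}

lemma norm_ofReal_cos_le_one (x : ℝ) : ‖(Real.cos x : ℂ)‖ ≤ 1 := by
  simpa only [Complex.norm_real, Real.norm_eq_abs] using Real.abs_cos_le_one x

lemma continuous_cosTransform (hg : IntegrableOn g (Ioi 0)) : Continuous (cosTransform g) := by
  refine continuous_of_dominated (fun v ↦ ?_) (fun v ↦ .of_forall fun u ↦ ?_) hg.norm
    (.of_forall fun u ↦ by fun_prop)
  · exact hg.aestronglyMeasurable.mul (Continuous.aestronglyMeasurable (by fun_prop))
  · rw [norm_mul]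
    exact mul_le_of_le_one_right (norm_nonneg _) (norm_ofReal_cos_le_one _)

lemma norm_ofReal_sin_div_le (x v : ℝ) : ‖(Real.sin x : ℂ) / v‖ ≤ 1 / |v| := by
  rw [norm_div, Complex.norm_real, Complex.norm_real, Real.norm_eq_abs, Real.norm_eq_abs]
  gcongr
  exact Real.abs_sin_le_one x

lemma hasDerivAt_ofReal_sin_mul_div {v : ℝ} (hv : v ≠ 0) (u : ℝ) :
    HasDerivAt (fun u : ℝ ↦ (Real.sin (u * v) : ℂ) / v) (Real.cos (u * v) : ℂ) u := by
  have hsin : HasDerivAt (fun u : ℝ ↦ Real.sin (u * v) / v) (Real.cos (u * v)) u := by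
    simpa [hv] using ((hasDerivAt_mul_const v).sin (x := u)).div_const v
  simpa using hsin.ofReal_comp

lemma cosTransform_eq_neg_integral_deriv_mul_sin (hzero : ContinuousWithinAt g (Ioi 0) 0)
    (hderiv : ∀ u ∈ Ioi 0, HasDerivAt g (g' u) u) (hg : IntegrableOn g (Ioi 0))
    (hg' : IntegrableOn g' (Ioi 0)) {v : ℝ} (hv : v ≠ 0) :
    cosTransform g v = -∫ u in Ioi (0 : ℝ), g' u * ((Real.sin (u * v) : ℂ) / v) := by
  have hbdd (u : ℝ) : ‖(Real.sin (u * v) : ℂ) / v‖ ≤ 1 / |v| := norm_ofReal_sin_div_le _ v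
  have hleft : Tendsto (g * fun u ↦ (Real.sin (u * v) : ℂ) / v) (𝓝[>] 0) (𝓝 0) := by
    have hsin : Tendsto (fun u : ℝ ↦ (Real.sin (u * v) : ℂ) / v) (𝓝[>] 0) (𝓝 0) :=
      (Continuous.tendsto' (by fun_prop) 0 0 (by simp)).mono_left nhdsWithin_le_nhds
    simpa [Pi.mul_def] using hzero.tendsto.mul hsin
  have hright : Tendsto (g * fun u ↦ (Real.sin (u * v) : ℂ) / v) atTop (𝓝 0) :=
    (tendsto_zero_of_hasDerivAt_of_integrableOn_Ioi hderiv hg' hg).zero_mul_isBoundedUnder_le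
      (isBoundedUnder_of ⟨_, hbdd⟩)
  have hgcos : IntegrableOn (g * fun u ↦ (Real.cos (u * v) : ℂ)) (Ioi 0) :=
    hg.mul_bdd (Continuous.aestronglyMeasurable (by fun_prop))
      (.of_forall fun u ↦ norm_ofReal_cos_le_one _)
  have hgsin : IntegrableOn (g' * fun u ↦ (Real.sin (u * v) : ℂ) / v) (Ioi 0) :=
    hg'.mul_bdd (Continuous.aestronglyMeasurable (by fun_prop)) (.of_forall hbdd)
  rw [cosTransform, integral_Ioi_mul_deriv_eq_deriv_mul hderiv
    (fun u _ ↦ hasDerivAt_ofReal_sin_mul_div hv u) hgcos hgsin hleft hright, sub_zero, zero_sub]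

lemma norm_cosTransform_le (hzero : ContinuousWithinAt g (Ioi 0) 0)
    (hderiv : ∀ u ∈ Ioi 0, HasDerivAt g (g' u) u) (hg : IntegrableOn g (Ioi 0))
    (hg' : IntegrableOn g' (Ioi 0)) {v : ℝ} (hv : v ≠ 0) :
    ‖cosTransform g v‖ ≤ (∫ u in Ioi (0 : ℝ), ‖g' u‖) * |v|⁻¹ := by
  rw [cosTransform_eq_neg_integral_deriv_mul_sin hzero hderiv hg hg' hv, norm_neg,
    ← integral_mul_const]
  refine norm_integral_le_of_norm_le (hg'.norm.mul_const _) (.of_forall fun u ↦ ?_)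
  rw [norm_mul, ← one_div]
  gcongr
  exact norm_ofReal_sin_div_le _ v

lemma mellinConvergent_cosTransform (hzero : ContinuousWithinAt g (Ioi 0) 0)
    (hderiv : ∀ u ∈ Ioi 0, HasDerivAt g (g' u) u) (hg : IntegrableOn g (Ioi 0))
    (hg' : IntegrableOn g' (Ioi 0)) (hs0 : 0 < s.re) (hs1 : s.re < 1) :
    MellinConvergent (cosTransform g) s := by
  have hcont := continuous_cosTransform hg
  refine mellinConvergent_of_isBigO_rpow (a := 1) (b := 0)
    (hcont.locallyIntegrable.locallyIntegrableOn _) ?_ hs1 ?_ hs0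
  · refine .of_bound (∫ u in Ioi (0 : ℝ), ‖g' u‖) ?_
    filter_upwards [eventually_ne_atTop 0] with v hv
    rw [Real.rpow_neg_one, norm_inv, Real.norm_eq_abs]
    exact norm_cosTransform_le hzero hderiv hg hg' hv
  · simpa using (hcont.tendsto 0).mono_left nhdsWithin_le_nhds |>.isBigO_one ℝ

lemma mellin_cexp_neg_smul_cosTransform (hg : IntegrableOn g (Ioi 0)) {ε : ℝ} (hε : 0 < ε)
    (hs : 0 < s.re) :
    mellin (fun v ↦ Complex.exp (-(ε * v)) • cosTransform g v) s =
      ∫ u in Ioi (0 : ℝ), g u * dampedCosMellin s ε u := by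
  have hkernel : IntegrableOn (fun v : ℝ ↦ (v : ℂ) ^ (s - 1) * Complex.exp (-(ε * v))) (Ioi 0) :=
    mellinConvergent_cexp_neg_mul (by simpa) hs
  have hint : Integrable (Function.uncurry fun v u : ℝ ↦
      (v : ℂ) ^ (s - 1) * Complex.exp (-(ε * v)) * g u * (Real.cos (u * v) : ℂ))
      ((volume.restrict (Ioi 0)).prod (volume.restrict (Ioi 0))) :=
    (hkernel.mul_prod hg).mul_bdd (Continuous.aestronglyMeasurable (by fun_prop))
      (.of_forall fun _ ↦ norm_ofReal_cos_le_one _)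
  calc mellin (fun v ↦ Complex.exp (-(ε * v)) • cosTransform g v) s
      = ∫ v in Ioi (0 : ℝ), ∫ u in Ioi (0 : ℝ),
          (v : ℂ) ^ (s - 1) * Complex.exp (-(ε * v)) * g u * (Real.cos (u * v) : ℂ) := by
        simp only [mellin, cosTransform, smul_eq_mul, ← integral_const_mul, mul_assoc]
    _ = ∫ u in Ioi (0 : ℝ), ∫ v in Ioi (0 : ℝ),
          (v : ℂ) ^ (s - 1) * Complex.exp (-(ε * v)) * g u * (Real.cos (u * v) : ℂ) :=
        integral_integral_swap hint
    _ = ∫ u in Ioi (0 : ℝ), g u * dampedCosMellin s ε u := by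
        congr with u
        rw [← (hasMellin_cexp_neg_mul_cos hε hs u).2, mellin, ← integral_const_mul]
        congr with v
        rw [smul_eq_mul]
        ring

lemma tendsto_integral_mul_dampedCosMellin
    (hgm : AEStronglyMeasurable g (volume.restrict (Ioi 0))) (hs : 0 ≤ s.re)
    (hg : MellinConvergent g (1 - s)) :
    Tendsto (fun ε ↦ ∫ u in Ioi (0 : ℝ), g u * dampedCosMellin s ε u) (𝓝[>] 0)
      (𝓝 (Complex.Gamma s * Complex.cos (Real.pi * s / 2) * mellin g (1 - s))) := by
  simp_rw [mellin, ← integral_const_mul]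
  refine tendsto_integral_filter_of_dominated_convergence
    (fun u ↦ ‖(u : ℂ) ^ (1 - s - 1) • g u‖ * (‖Complex.Gamma s‖ * Real.exp (Real.pi * |s.im|)))
    (.of_forall fun ε ↦ hgm.mul ?_) (.of_forall fun ε ↦ ?_) (hg.norm.mul_const _) ?_
  · unfold dampedCosMellin
    exact Measurable.aestronglyMeasurable (by fun_prop)
  · filter_upwards [ae_restrict_mem measurableSet_Ioi] with u (hu : 0 < u)
    have hnorm : ‖(u : ℂ) ^ (1 - s - 1) • g u‖ = |u| ^ (-s.re) * ‖g u‖ := by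
      rw [norm_smul, Complex.norm_cpow_eq_rpow_re_of_pos hu, abs_of_pos hu, sub_sub_cancel_left,
        Complex.neg_re]
    calc ‖g u * dampedCosMellin s ε u‖
        ≤ ‖g u‖ * (‖Complex.Gamma s‖ * Real.exp (Real.pi * |s.im|) * |u| ^ (-s.re)) := by
          rw [norm_mul]
          gcongr
          exact norm_dampedCosMellin_le hs ε hu.ne'
      _ = _ := by
          rw [hnorm]
          ring
  · filter_upwards [ae_restrict_mem measurableSet_Ioi] with u (hu : 0 < u)
    rw [sub_sub_cancel_left, smul_eq_mul, ← mul_assoc, mul_comm _ (g u)]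
    exact ((tendsto_dampedCosMellin s hu).mono_left nhdsWithin_le_nhds).const_mul _

theorem mellin_cosTransform (hg : IntegrableOn g (Ioi 0)) (hs : 0 < s.re)
    (hgs : MellinConvergent g (1 - s)) (hgc : MellinConvergent (cosTransform g) s) :
    mellin (cosTransform g) s =
      Complex.Gamma s * Complex.cos (Real.pi * s / 2) * mellin g (1 - s) := by
  have hdamped : (fun ε : ℝ ↦ mellin (fun v ↦ Complex.exp (-(ε * v)) • cosTransform g v) s)
      =ᶠ[𝓝[>] 0] fun ε ↦ ∫ u in Ioi (0 : ℝ), g u * dampedCosMellin s ε u := by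
    filter_upwards [self_mem_nhdsWithin] with ε hε
    exact mellin_cexp_neg_smul_cosTransform hg hε hs
  exact tendsto_nhds_unique ((tendsto_mellin_cexp_neg_smul hgc).congr' hdamped)
    (tendsto_integral_mul_dampedCosMellin hg.aestronglyMeasurable hs.le hgs)

end CosTransform

section HbarRe

variable {h : ℝ → ℂ}

/-- The function `u ↦ h(√u) (2πu)^{−1/2} u^{w/2}` whose cosine transform is `ħ^ℜ_w`. -/
noncomputable def hbarAmplitude (h : ℝ → ℂ) (w : ℂ) (u : ℝ) : ℂ :=
  h (√u) * ((1 / √(2 * Real.pi * u) : ℝ) : ℂ) * (u : ℂ) ^ (w / 2)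

lemma hbarRe_eq_cosTransform (h : ℝ → ℂ) (w : ℂ) : hbarRe h w = cosTransform (hbarAmplitude h w) :=
  rfl

lemma mellin_hbarAmplitude_one_sub (h : ℝ → ℂ) (w s : ℂ) :
    mellin (hbarAmplitude h w) (1 - s) =
      ∫ u in Ioi (0 : ℝ), h (√u) * ((1 / √(2 * Real.pi * u) : ℝ) : ℂ) * (u : ℂ) ^ (w / 2 - s) := by
  refine setIntegral_congr_fun measurableSet_Ioi fun u (hu : 0 < u) ↦ ?_
  rw [smul_eq_mul, hbarAmplitude, sub_eq_add_neg (w / 2),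
    Complex.cpow_add _ _ (Complex.ofReal_ne_zero.2 hu.ne'), sub_sub_cancel_left]
  ring

lemma support_hbarAmplitude_subset (hsupp : tsupport h ⊆ Ioi 0) (w : ℂ) :
    Function.support (hbarAmplitude h w) ⊆ (· ^ 2) '' tsupport h := by
  intro u hu
  have hsqrt : √u ∈ tsupport h :=
    subset_tsupport h (left_ne_zero_of_mul (left_ne_zero_of_mul hu))
  exact ⟨√u, hsqrt, Real.sq_sqrt (Real.sqrt_pos.1 (hsupp hsqrt)).le⟩

lemma hasCompactSupport_hbarAmplitude (hcs : HasCompactSupport h) (hsupp : tsupport h ⊆ Ioi 0)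
    (w : ℂ) : HasCompactSupport (hbarAmplitude h w) :=
  .of_support_subset_isCompact (hcs.isCompact.image (continuous_pow 2))
    (support_hbarAmplitude_subset hsupp w)

lemma tsupport_hbarAmplitude_subset (hcs : HasCompactSupport h) (hsupp : tsupport h ⊆ Ioi 0)
    (w : ℂ) : tsupport (hbarAmplitude h w) ⊆ Ioi 0 := by
  refine (closure_minimal (support_hbarAmplitude_subset hsupp w)
    (hcs.isCompact.image (continuous_pow 2)).isClosed).trans ?_
  rintro _ ⟨x, hx, rfl⟩
  exact pow_pos (mem_Ioi.1 (hsupp hx)) 2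

lemma contDiffAt_ofReal_cpow_const {u : ℝ} (hu : 0 < u) (a : ℂ) {n : WithTop ℕ∞} :
    ContDiffAt ℝ n (fun x : ℝ ↦ (x : ℂ) ^ a) u := by
  have hcpow : AnalyticAt ℂ (fun z : ℂ ↦ z ^ a) u :=
    analyticAt_id.cpow analyticAt_const (Complex.ofReal_mem_slitPlane.2 hu)
  exact (hcpow.contDiffAt.restrict_scalars ℝ).comp u Complex.ofRealCLM.contDiff.contDiffAt

lemma contDiff_hbarAmplitude {n : WithTop ℕ∞} (hh : ContDiff ℝ n h) (hcs : HasCompactSupport h)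
    (hsupp : tsupport h ⊆ Ioi 0) (w : ℂ) : ContDiff ℝ n (hbarAmplitude h w) := by
  refine (contMDiff_of_tsupport fun u hu ↦ ContDiffAt.contMDiffAt ?_).contDiff
  have hu : 0 < u := tsupport_hbarAmplitude_subset hcs hsupp w hu
  have hpos : 0 < 2 * Real.pi * u := by positivity
  have hcomp : ContDiffAt ℝ n (fun x ↦ h (√x)) u :=
    hh.contDiffAt.comp u (Real.contDiffAt_sqrt hu.ne')
  have hweight : ContDiffAt ℝ n (fun x : ℝ ↦ ((1 / √(2 * Real.pi * x) : ℝ) : ℂ)) u :=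
    Complex.ofRealCLM.contDiff.contDiffAt.comp u <|
      contDiffAt_const.div (.sqrt (by fun_prop) hpos.ne') (Real.sqrt_pos.2 hpos).ne'
  exact (hcomp.mul hweight).mul (contDiffAt_ofReal_cpow_const hu _)

theorem hbarRe_mellin_transform_eval_general (hh : ContDiff ℝ 1 h) (hcs : HasCompactSupport h)
    (hsupp : tsupport h ⊆ Ioi 0) (w : ℂ) {s : ℂ} (hs0 : 0 < s.re) (hs1 : s.re < 1) :
    HasMellin (hbarRe h w) s
      (Complex.Gamma s * Complex.cos (Real.pi * s / 2) *
        ∫ u in Ioi (0 : ℝ),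
          h (√u) * ((1 / √(2 * Real.pi * u) : ℝ) : ℂ) * (u : ℂ) ^ (w / 2 - s)) := by
  have hg := contDiff_hbarAmplitude hh hcs hsupp w
  have hgcs := hasCompactSupport_hbarAmplitude hcs hsupp w
  have hgsupp := tsupport_hbarAmplitude_subset hcs hsupp w
  have hint : IntegrableOn (hbarAmplitude h w) (Ioi 0) :=
    (hg.continuous.integrable_of_hasCompactSupport hgcs).integrableOn
  have hint' : IntegrableOn (deriv (hbarAmplitude h w)) (Ioi 0) :=
    ((hg.continuous_deriv le_rfl).integrable_of_hasCompactSupport hgcs.deriv).integrableOn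
  have hconv : MellinConvergent (cosTransform (hbarAmplitude h w)) s :=
    mellinConvergent_cosTransform hg.continuous.continuousWithinAt
      (fun u _ ↦ (hg.differentiable one_ne_zero u).hasDerivAt) hint hint' hs0 hs1
  rw [hbarRe_eq_cosTransform, ← mellin_hbarAmplitude_one_sub]
  exact ⟨hconv, mellin_cosTransform hint hs0
    (mellinConvergent_of_hasCompactSupport hg.continuous hgcs hgsupp _) hconv⟩

end HbarRe

/-- Explicit evaluation of the Mellin transform of `ħ^ℜ_w` in the strip
`0 < Re s < 1`:
`∫₀^∞ ħ^ℜ_w(v) v^{s−1} dv = Γ(s) cos(πs/2) ∫₀^∞ h(√u) (2πu)^{−1/2} u^{w/2−s} du`. -/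
theorem hbarRe_mellin_transform_eval
    (h : ℝ → ℂ) (hsm : ContDiff ℝ (⊤ : ℕ∞) h) (hcs : HasCompactSupport h)
    (hsupp : tsupport h ⊆ Set.Ioi 0) (w : ℂ) (s : ℂ)
    (hs0 : 0 < s.re) (hs1 : s.re < 1) :
    ∫ v in Set.Ioi (0 : ℝ), hbarRe h w v * (v : ℂ) ^ (s - 1) =
      Complex.Gamma s * Complex.cos ((Real.pi : ℂ) * s / 2) *
        ∫ u in Set.Ioi (0 : ℝ),
          h (Real.sqrt u) * ((1 / Real.sqrt (2 * Real.pi * u) : ℝ) : ℂ) *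
            (u : ℂ) ^ (w / 2 - s) := by
  simp_rw [mul_comm (hbarRe h w _)]
  exact (hbarRe_mellin_transform_eval_general (hsm.of_le (mod_cast le_top)) hcs hsupp w hs0 hs1).2
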